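/- Fix an integer m ≥ 0 and a real number ε with 0 < ε < π/2. Define q_{l,m}(θ) := ((2l+1)/(4π)) · ((l−m)!/(l+m)!) · P_{l,m}(cos θ)² for θ ∈ [0, π] and integers l ≥ m. Then for every continuous function f : [0, π] → ℝ, lim_{l→∞} 2π ∫_ε^{π−ε} f(θ) · q_{l,m}(θ) · sin θ dθ = (1/π) ∫_ε^{π−ε} f(θ) dθ. -/

import Mathlib

/-!
With `x = cos θ`, the densities `2π q_{l,m}(θ) sin θ` are the squares of the orthonormal
polynomials for the weight `(1 − x²)^m` on `[-1, 1]`, namely multiples of `P_l^{(m)}`. No pointwise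
asymptotics of Legendre functions are needed: the limit follows from the three-term recurrence.

The Rodrigues formula gives the recurrence
`(l + 2 − m) P_{l+2}^{(m)} = (2l + 3) x P_{l+1}^{(m)} − (l + 1 + m) P_l^{(m)}`
(`legDeriv_recurrence`) and the self-adjoint equation (`legDeriv_ode`), whose integration by parts
yields orthogonality and the norms (`legGram_orthogonal`, `legWeight_mul_legGram_self`). Since both
recurrence coefficients tend to `1/2`, induction on `k` shows that the entries of multiplication by
`x^k` along the `j`-th diagonal tend to `(1/π) ∫_0^π cos^k θ cos (jθ) dθ`
(`tendsto_matrix_entry`). The diagonal `j = 0` is convergence of all moments to those of the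
uniform distribution in `θ`.

Weierstrass approximation extends this to continuous functions on `[0, π]`
(`tendsto_continuous`), and, the limit having no atoms, to their restrictions to
`[ε, π − ε]` (`tendsto_truncated`).
-/

open Filter Real

/-- The associated Legendre function
`P_{l,m}(x) = ((−1)^m / (2^l l!)) (1 − x²)^{m/2} D^{l+m}[(x² − 1)^l](x)`. -/
noncomputable def assocLegendre (l m : ℕ) (x : ℝ) : ℝ :=
  ((-1 : ℝ) ^ m / (2 ^ l * (Nat.factorial l : ℝ))) * (1 - x ^ 2) ^ ((m : ℝ) / 2) *
    iteratedDeriv (l + m) (fun y : ℝ => (y ^ 2 - 1) ^ l) x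

/-- `q_{l,m}(θ) = ((2l+1)/(4π)) ((l−m)!/(l+m)!) P_{l,m}(cos θ)²`, the squared modulus
of the spherical harmonic `Y_{l,m}`. -/
noncomputable def sphericalHarmonicSq (l m : ℕ) (θ : ℝ) : ℝ :=
  ((2 * (l : ℝ) + 1) / (4 * π)) *
    ((Nat.factorial (l - m) : ℝ) / (Nat.factorial (l + m) : ℝ)) *
    (assocLegendre l m (Real.cos θ)) ^ 2

/-! ### Rodrigues formula, recurrence and differential equation -/

open Polynomial in
/-- The normalised Rodrigues kernel `(X² − 1)^l / (2^l l!)`, whose `l`-th derivative is the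
Legendre polynomial `P_l`. -/
noncomputable def rodrigues (l : ℕ) : ℝ[X] :=
  C ((2 ^ l * (Nat.factorial l : ℝ))⁻¹) * (X ^ 2 - 1) ^ l

open Polynomial in
/-- `legDeriv l m` is the `m`-th derivative of the Legendre polynomial `P_l`. -/
noncomputable def legDeriv (l m : ℕ) : ℝ[X] :=
  derivative^[l + m] (rodrigues l)

section Algebra

open Polynomial

lemma rodrigues_const (l : ℕ) :
    C ((2 ^ l * (Nat.factorial l : ℝ))⁻¹) =
      2 * ((l : ℝ[X]) + 1) * C ((2 ^ (l + 1) * (Nat.factorial (l + 1) : ℝ))⁻¹) := by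
  have : (2 * ((l : ℝ[X]) + 1)) = C (2 * ((l : ℝ) + 1)) := by simp [C_ofNat]
  rw [this, ← C_mul]
  congr 1
  have : (Nat.factorial l : ℝ) ≠ 0 := by positivity
  rw [Nat.factorial_succ]
  push_cast
  field_simp
  ring

lemma rodrigues_mul (l : ℕ) :
    (X ^ 2 - 1) * rodrigues l = 2 * ((l : ℝ[X]) + 1) * rodrigues (l + 1) := by
  unfold rodrigues
  rw [rodrigues_const l]
  ring

lemma derivative_rodrigues_succ (l : ℕ) :
    derivative (rodrigues (l + 1)) = X * rodrigues l := by
  unfold rodrigues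
  rw [rodrigues_const l]
  simp [derivative_pow, C_ofNat]
  ring

lemma derivative_two_rodrigues (l : ℕ) :
    derivative^[2] (rodrigues (l + 2)) = (2 * (l : ℝ[X]) + 3) * rodrigues (l + 1) + rodrigues l := by
  have h := rodrigues_mul l
  simp only [Function.iterate_succ, Function.iterate_zero, Function.comp, id]
  rw [derivative_rodrigues_succ (l + 1), derivative_mul, derivative_rodrigues_succ, derivative_X]
  linear_combination h

/-- The three-term recurrence for the `m`-th derivatives of the Legendre polynomials. -/
lemma legDeriv_recurrence (l m : ℕ) :
    ((l : ℝ[X]) + 2 - (m : ℝ[X])) * legDeriv (l + 2) m =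
      (2 * (l : ℝ[X]) + 3) * (X * legDeriv (l + 1) m) - ((l : ℝ[X]) + 1 + (m : ℝ[X])) * legDeriv l m := by
  have h1 : legDeriv (l + 2) m =
      X * legDeriv (l + 1) m + ((l : ℝ[X]) + 1 + (m : ℝ[X])) * derivative^[l + m] (rodrigues (l + 1)) := by
    unfold legDeriv
    rw [show l + 2 + m = (l + 1 + m) + 1 by ring, Function.iterate_succ_apply,
      derivative_rodrigues_succ (l + 1), mul_comm X, iterate_derivative_mul_X,
      show l + 1 + m - 1 = l + m by omega]
    simp only [nsmul_eq_mul]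
    push_cast
    ring
  have h2 : legDeriv (l + 2) m =
      (2 * (l : ℝ[X]) + 3) * derivative^[l + m] (rodrigues (l + 1)) + legDeriv l m := by
    unfold legDeriv
    rw [show l + 2 + m = (l + m) + 2 by ring, Function.iterate_add_apply,
      derivative_two_rodrigues, iterate_map_add]
    have : (2 * (l : ℝ[X]) + 3) = ((2 * l + 3 : ℕ) : ℝ[X]) := by push_cast; ring
    rw [this, iterate_derivative_natCast_mul]
  linear_combination (2 * (l : ℝ[X]) + 3) * h1 - ((l : ℝ[X]) + 1 + (m : ℝ[X])) * h2

lemma derivative_legDeriv (l m : ℕ) : derivative (legDeriv l m) = legDeriv l (m + 1) := by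
  unfold legDeriv
  rw [← add_assoc, Function.iterate_succ_apply']

/-- The differential equation satisfied by all derivatives of the Rodrigues kernel. -/
lemma rodrigues_ode (l j : ℕ) :
    (X ^ 2 - 1) * derivative^[j + 2] (rodrigues l)
      + 2 * ((j : ℝ[X]) + 1 - (l : ℝ[X])) * X * derivative^[j + 1] (rodrigues l)
      + ((j : ℝ[X]) + 1) * ((j : ℝ[X]) - 2 * (l : ℝ[X])) * derivative^[j] (rodrigues l) = 0 := by
  induction j with
  | zero =>
    have h : (X ^ 2 - 1) * derivative (rodrigues l) = 2 * (l : ℝ[X]) * X * rodrigues l := by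
      cases l with
      | zero => simp [rodrigues]
      | succ l =>
        rw [derivative_rodrigues_succ]
        push_cast
        linear_combination X * rodrigues_mul l
    have hd := congrArg derivative h
    simp only [derivative_mul, derivative_sub, derivative_X_pow, derivative_one,
      derivative_natCast, derivative_ofNat, derivative_X] at hd
    simp only [Function.iterate_succ, Function.iterate_zero, Function.comp, id]
    simp [C_ofNat] at hd ⊢
    linear_combination hd
  | succ j ih =>
    have hd := congrArg derivative ih
    simp only [derivative_mul, derivative_add, derivative_sub, derivative_X_pow, derivative_one,
      derivative_natCast, derivative_ofNat, derivative_X, ← Function.iterate_succ_apply'] at hd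
    simp [C_ofNat] at hd ⊢
    linear_combination hd

/-- Legendre's equation in self-adjoint form, differentiated `m` times. -/
lemma legDeriv_ode (l m : ℕ) :
    derivative ((1 - X ^ 2) ^ (m + 1) * legDeriv l (m + 1)) =
      - (((l : ℝ[X]) - (m : ℝ[X])) * ((l : ℝ[X]) + (m : ℝ[X]) + 1)) * ((1 - X ^ 2) ^ m * legDeriv l m) := by
  have h := rodrigues_ode l (l + m)
  rw [derivative_mul, derivative_legDeriv]
  simp only [legDeriv, derivative_pow, derivative_sub, derivative_one, derivative_X]
  simp only [show l + (m + 1) = l + m + 1 by ring, show l + (m + 1 + 1) = l + m + 2 by ring]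
  simp [C_ofNat] at h ⊢
  linear_combination (-(1 - X ^ 2 : ℝ[X]) ^ m) * h

end Algebra

/-! ### Orthogonality -/

section Orthogonality

open Polynomial

/-- The functional `p ↦ ∫_{-1}^{1} p(x) dx`, written in the variable `x = cos θ`. -/
noncomputable def legInt : ℝ[X] →ₗ[ℝ] ℝ where
  toFun p := ∫ θ in (0 : ℝ)..π, p.eval (cos θ) * sin θ
  map_add' p q := by
    simp only [eval_add, add_mul]
    apply intervalIntegral.integral_add <;> apply Continuous.intervalIntegrable <;> fun_prop
  map_smul' c p := by
    simp [mul_assoc]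

lemma legInt_apply (p : ℝ[X]) : legInt p = ∫ θ in (0 : ℝ)..π, p.eval (cos θ) * sin θ := rfl

lemma legInt_C_mul (c : ℝ) (p : ℝ[X]) : legInt (C c * p) = c * legInt p := by
  rw [← smul_eq_C_mul, map_smul, smul_eq_mul]

lemma legInt_derivative (p : ℝ[X]) : legInt (derivative p) = p.eval 1 - p.eval (-1) := by
  rw [legInt_apply]
  have h : ∀ θ ∈ Set.uIcc 0 π, HasDerivAt (fun θ => - p.eval (cos θ))
      ((derivative p).eval (cos θ) * sin θ) θ := by
    intro θ _
    have := ((p.hasDerivAt (cos θ)).comp θ (hasDerivAt_cos θ)).neg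
    exact this.congr_deriv (by ring)
  rw [intervalIntegral.integral_eq_sub_of_hasDerivAt h
    (by apply Continuous.intervalIntegrable; fun_prop)]
  simp
  ring

/-- The weighted inner product `∫ (1 − x²)^m P_l^{(m)} P_k^{(m)}`. -/
noncomputable def legGram (m l k : ℕ) : ℝ :=
  legInt ((1 - X ^ 2) ^ m * legDeriv l m * legDeriv k m)

lemma legGram_comm (m l k : ℕ) : legGram m l k = legGram m k l := by
  unfold legGram
  congr 1
  ring

/-- Integration by parts lowers the order `m`; the boundary terms vanish with the weight. -/
lemma legGram_succ (m l k : ℕ) :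
    legGram (m + 1) l k = ((l : ℝ) - m) * (l + m + 1) * legGram m l k := by
  have h := legInt_derivative ((1 - X ^ 2) ^ (m + 1) * legDeriv l (m + 1) * legDeriv k m)
  rw [derivative_mul, legDeriv_ode, derivative_legDeriv, map_add] at h
  have e : -(((l : ℝ[X]) - (m : ℝ[X])) * ((l : ℝ[X]) + (m : ℝ[X]) + 1)) * ((1 - X ^ 2) ^ m * legDeriv l m) * legDeriv k m
      = C (-(((l : ℝ) - m) * (l + m + 1))) * ((1 - X ^ 2) ^ m * legDeriv l m * legDeriv k m) := by
    simp
    ring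
  rw [e, legInt_C_mul] at h
  simp at h
  unfold legGram
  linarith

/-- At `m = 0` the two symmetric forms of `legGram_succ` carry different eigenvalues. -/
lemma legGram_orthogonal {l k : ℕ} (hlk : l ≠ k) (m : ℕ) : legGram m l k = 0 := by
  induction m with
  | zero =>
    have h1 := legGram_succ 0 l k
    have h2 := legGram_succ 0 k l
    rw [legGram_comm, h2, legGram_comm 0 k l] at h1
    have h3 : ((k : ℝ) - l) * (k + l + 1) * legGram 0 l k = 0 := by
      push_cast at h1
      linear_combination h1
    have h4 : (k : ℝ) - l ≠ 0 := sub_ne_zero.2 (by exact_mod_cast hlk.symm)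
    have h5 : (k : ℝ) + l + 1 ≠ 0 := by positivity
    simpa [h4, h5] using h3
  | succ m ih => rw [legGram_succ, ih, mul_zero]

/-- Scalar form of the recurrence, paired against an arbitrary polynomial. -/
lemma legInt_recurrence (m n : ℕ) (p : ℝ[X]) :
    legInt (p * X * legDeriv (n + 1) m) =
      ((n : ℝ) + 2 - m) / (2 * n + 3) * legInt (p * legDeriv (n + 2) m)
        + ((n : ℝ) + 1 + m) / (2 * n + 3) * legInt (p * legDeriv n m) := by
  have h : C (2 * (n : ℝ) + 3) * (p * X * legDeriv (n + 1) m) =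
      C ((n : ℝ) + 2 - m) * (p * legDeriv (n + 2) m)
        + C ((n : ℝ) + 1 + m) * (p * legDeriv n m) := by
    simp [C_ofNat]
    linear_combination (-p) * legDeriv_recurrence n m
  have hd := congrArg legInt h
  rw [map_add legInt, legInt_C_mul, legInt_C_mul, legInt_C_mul] at hd
  have : (2 * (n : ℝ) + 3) ≠ 0 := by positivity
  field_simp
  linarith

lemma legGram_zero_self (l : ℕ) : legGram 0 l l = 2 / (2 * l + 1) := by
  have h0 : legGram 0 0 0 = 2 := by
    simp [legGram, legDeriv, rodrigues, legInt_apply]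
    norm_num
  have h1 : legGram 0 1 1 = 2 / 3 := by
    have e : legDeriv 1 0 = X := by
      have := derivative_rodrigues_succ 0
      simpa [legDeriv, rodrigues] using this
    have := legInt_derivative (C (1 / 3) * X ^ 3)
    simp only [legGram, e, pow_zero, one_mul]
    have e2 : derivative (C (1 / 3 : ℝ) * X ^ 3) = X * X := by
      simp only [derivative_C_mul, derivative_X_pow]
      rw [← mul_assoc, ← C_mul]
      norm_num
      ring
    rw [e2] at this
    rw [this]
    norm_num
  induction l with
  | zero => simpa using h0
  | succ l ih =>
    cases l with
    | zero => norm_num [h1]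
    | succ l =>
      -- Evaluate `∫ x P_{l+1} P_{l+2}` through the recurrence at either factor.
      have a := legInt_recurrence 0 l (legDeriv (l + 2) 0)
      have b := legInt_recurrence 0 (l + 1) (legDeriv (l + 1) 0)
      have o1 := legGram_orthogonal (show l + 2 ≠ l by omega) 0
      have o2 := legGram_orthogonal (show l + 1 ≠ l + 3 by omega) 0
      simp only [legGram, pow_zero, one_mul] at ih o1 o2 ⊢
      simp only [add_assoc, Nat.reduceAdd] at a b ih o1 o2 ⊢
      rw [o1] at a
      rw [o2, ih, show legDeriv (l + 1) 0 * X * legDeriv (l + 2) 0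
        = legDeriv (l + 2) 0 * X * legDeriv (l + 1) 0 by ring, a] at b
      push_cast at b ⊢
      have : (l : ℝ) + 2 ≠ 0 := by positivity
      have h3 : 2 * (l : ℝ) + 3 ≠ 0 := by positivity
      have h5 : 2 * ((l : ℝ) + 1) + 3 ≠ 0 := by positivity
      have h6 : 2 * ((l : ℝ) + 2) + 1 ≠ 0 := by positivity
      have h7 : 2 * ((l : ℝ) + 1) + 1 ≠ 0 := by positivity
      field_simp at b ⊢
      apply mul_left_cancel₀ (mul_ne_zero this h3)
      linear_combination b

/-- The factor making `(legWeight m l) (1 − x²)^m (P_l^{(m)})²` a probability density. -/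
noncomputable def legWeight (m l : ℕ) : ℝ :=
  (2 * (l : ℝ) + 1) / 2 * ((Nat.factorial (l - m) : ℝ) / (Nat.factorial (l + m) : ℝ))

lemma legWeight_mul_legGram_self {m l : ℕ} (h : m ≤ l) : legWeight m l * legGram m l l = 1 := by
  have key : ∀ m ≤ l, legGram m l l =
      2 / (2 * l + 1) * ((Nat.factorial (l + m) : ℝ) / (Nat.factorial (l - m) : ℝ)) := by
    intro m
    induction m with
    | zero =>
      intro _
      have : (Nat.factorial l : ℝ) ≠ 0 := by positivity
      simp [legGram_zero_self, this]
    | succ m ih =>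
      intro hm
      rw [legGram_succ, ih (by omega)]
      obtain ⟨d, rfl⟩ : ∃ d, l = m + 1 + d := ⟨l - (m + 1), by omega⟩
      rw [show m + 1 + d - m = d + 1 by omega, show m + 1 + d - (m + 1) = d by omega,
        ← add_assoc (m + 1 + d) m 1, Nat.factorial_succ, Nat.factorial_succ]
      have : (Nat.factorial d : ℝ) ≠ 0 := by positivity
      push_cast
      field_simp
      ring
  rw [key m h, legWeight]
  have : (Nat.factorial (l + m) : ℝ) ≠ 0 := by positivity
  have : (Nat.factorial (l - m) : ℝ) ≠ 0 := by positivity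
  field_simp

end Orthogonality

/-! ### Moments of the squared Legendre functions -/

section Moments

open Polynomial Topology

lemma tendsto_recurrence_coeff (a : ℝ) :
    Tendsto (fun n : ℕ => ((n : ℝ) + a) / (2 * n + 3)) atTop (𝓝 (1 / 2)) := by
  have h1 : Tendsto (fun n : ℕ => (a - 3 / 2) / (2 * (n : ℝ) + 3)) atTop (𝓝 0) := by
    apply Tendsto.div_atTop tendsto_const_nhds
    apply tendsto_atTop_add_const_right
    exact tendsto_natCast_atTop_atTop.const_mul_atTop (by norm_num)
  have h2 := h1.const_add (1 / 2)
  rw [add_zero] at h2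
  refine h2.congr fun n => ?_
  have : (2 * (n : ℝ) + 3) ≠ 0 := by positivity
  field_simp
  ring

lemma integral_cos_int_mul (j : ℤ) :
    ∫ θ in (0 : ℝ)..π, cos (j * θ) = if j = 0 then π else 0 := by
  split_ifs with h
  · simp [h]
  · rw [intervalIntegral.integral_comp_mul_left (fun x => cos x) (by exact_mod_cast h)]
    simp

/-- Asymptotics of the matrix entries of multiplication by `x^k` along the `j`-th diagonal. Both
recurrence coefficients tend to `1/2`, matching `cos θ cos jθ = (cos (j+1)θ + cos (j-1)θ) / 2`, so
the entries converge to those of the arcsine measure. -/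
lemma tendsto_matrix_entry (m k : ℕ) : ∀ j : ℤ,
    Tendsto (fun l : ℕ => legWeight m l *
        legInt (X ^ k * ((1 - X ^ 2) ^ m * legDeriv l m) * legDeriv ((l : ℤ) + j).toNat m))
      atTop (𝓝 (1 / π * ∫ θ in (0 : ℝ)..π, cos θ ^ k * cos (j * θ))) := by
  induction k with
  | zero =>
    intro j
    simp only [pow_zero, one_mul, integral_cos_int_mul]
    refine tendsto_const_nhds.congr' ?_
    filter_upwards [eventually_ge_atTop (m + j.natAbs)] with l hl
    change _ = legWeight m l * legGram m l _
    split_ifs with hj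
    · subst hj
      have := legWeight_mul_legGram_self (show m ≤ l by omega)
      simp [this, pi_ne_zero]
    · rw [legGram_orthogonal (by omega)]
      simp
  | succ k ih =>
    intro j
    have hn : Tendsto (fun l : ℕ => ((l : ℤ) + (j - 1)).toNat) atTop atTop := by
      refine tendsto_atTop.2 fun b => ?_
      filter_upwards [eventually_ge_atTop (b + (j - 1).natAbs)] with l hl
      omega
    have h1 := (((tendsto_recurrence_coeff (2 - m)).comp hn).mul (ih (j + 1))).add
      (((tendsto_recurrence_coeff (1 + m)).comp hn).mul (ih (j - 1)))
    have e : 1 / 2 * (1 / π * ∫ θ in (0 : ℝ)..π, cos θ ^ k * cos (((j + 1 : ℤ) : ℝ) * θ))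
        + 1 / 2 * (1 / π * ∫ θ in (0 : ℝ)..π, cos θ ^ k * cos (((j - 1 : ℤ) : ℝ) * θ))
        = 1 / π * ∫ θ in (0 : ℝ)..π, cos θ ^ (k + 1) * cos (j * θ) := by
      have : ∀ θ : ℝ, cos θ ^ (k + 1) * cos (j * θ) =
          1 / 2 * (cos θ ^ k * cos (((j + 1 : ℤ) : ℝ) * θ))
            + 1 / 2 * (cos θ ^ k * cos (((j - 1 : ℤ) : ℝ) * θ)) := by
        intro θ
        push_cast
        rw [add_mul, sub_mul, one_mul, cos_add, cos_sub]
        ring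
      simp only [this]
      rw [intervalIntegral.integral_add, intervalIntegral.integral_const_mul,
        intervalIntegral.integral_const_mul]
      · ring
      all_goals apply Continuous.intervalIntegrable; fun_prop
    rw [e] at h1
    refine h1.congr' ?_
    filter_upwards [eventually_ge_atTop (1 + j.natAbs)] with l hl
    have r := legInt_recurrence m ((l : ℤ) + (j - 1)).toNat
      (X ^ k * ((1 - X ^ 2) ^ m * legDeriv l m))
    rw [show ((l : ℤ) + (j - 1)).toNat + 1 = ((l : ℤ) + j).toNat by omega,
      show ((l : ℤ) + (j - 1)).toNat + 2 = ((l : ℤ) + (j + 1)).toNat by omega] at r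
    rw [show X ^ (k + 1) * ((1 - X ^ 2) ^ m * legDeriv l m) * legDeriv ((l : ℤ) + j).toNat m =
      X ^ k * ((1 - X ^ 2) ^ m * legDeriv l m) * X * legDeriv ((l : ℤ) + j).toNat m by ring, r]
    simp only [Function.comp]
    ring

/-- The density `2π q_{l,m}(θ) sin θ` in terms of derivatives of Legendre polynomials. -/
noncomputable def legDensity (m l : ℕ) (θ : ℝ) : ℝ :=
  legWeight m l * ((1 - cos θ ^ 2) ^ m * (legDeriv l m).eval (cos θ) ^ 2) * sin θ

lemma continuous_legDensity (m l : ℕ) : Continuous (legDensity m l) := by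
  unfold legDensity
  fun_prop

lemma legDensity_nonneg (m l : ℕ) {θ : ℝ} (hθ : θ ∈ Set.Icc 0 π) : 0 ≤ legDensity m l θ := by
  have h1 : 0 ≤ sin θ := sin_nonneg_of_mem_Icc hθ
  have h2 : 0 ≤ 1 - cos θ ^ 2 := by rw [← sin_sq]; positivity
  unfold legDensity legWeight
  positivity

lemma iteratedDeriv_eval (p : ℝ[X]) (n : ℕ) :
    iteratedDeriv n (fun y => p.eval y) = fun y => (derivative^[n] p).eval y := by
  induction n with
  | zero => simp
  | succ n ih =>
    rw [iteratedDeriv_succ, ih, Function.iterate_succ_apply']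
    ext y
    simp

lemma sphericalHarmonicSq_eq (m l : ℕ) (θ : ℝ) :
    2 * π * (sphericalHarmonicSq l m θ * sin θ) = legDensity m l θ := by
  have h : (legDeriv l m).eval (cos θ) = (2 ^ l * (Nat.factorial l : ℝ))⁻¹ *
      iteratedDeriv (l + m) (fun y : ℝ => (y ^ 2 - 1) ^ l) (cos θ) := by
    have e : (fun y : ℝ => (y ^ 2 - 1) ^ l) = fun y => ((X ^ 2 - 1 : ℝ[X]) ^ l).eval y := by
      ext y
      simp
    rw [e, iteratedDeriv_eval, legDeriv, rodrigues, iterate_derivative_C_mul]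
    simp
  have h2 : 0 ≤ 1 - cos θ ^ 2 := by rw [← sin_sq]; positivity
  have h3 : ((1 - cos θ ^ 2) ^ ((m : ℝ) / 2)) ^ 2 = (1 - cos θ ^ 2) ^ m := by
    rw [← rpow_mul_natCast h2, Nat.cast_ofNat, div_mul_cancel₀ _ two_ne_zero, rpow_natCast]
  have h4 : ((-1 : ℝ) ^ m) ^ 2 = 1 := by rw [← pow_mul, mul_comm, pow_mul]; simp
  rw [sphericalHarmonicSq, assocLegendre, legDensity, legWeight, h, mul_pow, mul_pow, mul_pow,
    div_pow, h3, h4]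
  field_simp
  ring

lemma tendsto_polynomial (m : ℕ) (p : ℝ[X]) :
    Tendsto (fun l : ℕ => ∫ θ in (0 : ℝ)..π, p.eval (cos θ) * legDensity m l θ)
      atTop (𝓝 (∫ θ in (0 : ℝ)..π, p.eval (cos θ) * (1 / π))) := by
  induction p using Polynomial.induction_on' with
  | add p q hp hq =>
    simp only [eval_add, add_mul]
    have h := hp.add hq
    rw [← intervalIntegral.integral_add] at h
    · refine h.congr fun l => ?_
      have := continuous_legDensity m l
      rw [← intervalIntegral.integral_add] <;> apply Continuous.intervalIntegrable <;> fun_prop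
    all_goals apply Continuous.intervalIntegrable; fun_prop
  | monomial k a =>
    have h := (tendsto_matrix_entry m k 0).const_mul a
    simp only [Int.cast_zero, zero_mul, cos_zero, mul_one, add_zero, Int.toNat_natCast] at h
    have e : a * (1 / π * ∫ θ in (0 : ℝ)..π, cos θ ^ k) =
        ∫ θ in (0 : ℝ)..π, (monomial k a).eval (cos θ) * (1 / π) := by
      rw [← intervalIntegral.integral_const_mul, ← intervalIntegral.integral_const_mul]
      congr 1
      ext θ
      simp only [eval_monomial]
      ring
    rw [← e]
    refine h.congr fun l => ?_
    rw [legInt_apply, ← intervalIntegral.integral_const_mul, ← intervalIntegral.integral_const_mul]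
    congr 1
    ext θ
    simp only [eval_monomial, legDensity, eval_mul, eval_pow, eval_X, eval_sub, eval_one]
    ring

end Moments

/-! ### From polynomials to truncated continuous functions -/

section Approximation

open Topology MeasureTheory

lemma abs_integral_sub_le {F h ψ ρ : ℝ → ℝ} (hρ : Continuous ρ)
    (hρ0 : ∀ θ ∈ Set.Icc 0 π, 0 ≤ ρ θ)
    (hF : IntervalIntegrable F volume 0 π) (hh : IntervalIntegrable h volume 0 π)
    (hψ : IntervalIntegrable ψ volume 0 π) (hb : ∀ θ ∈ Set.Icc 0 π, |F θ - h θ| ≤ ψ θ) :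
    |(∫ θ in (0 : ℝ)..π, F θ * ρ θ) - ∫ θ in (0 : ℝ)..π, h θ * ρ θ|
      ≤ ∫ θ in (0 : ℝ)..π, ψ θ * ρ θ := by
  rw [← intervalIntegral.integral_sub (hF.mul_continuousOn hρ.continuousOn)
    (hh.mul_continuousOn hρ.continuousOn), ← norm_eq_abs]
  refine intervalIntegral.norm_integral_le_of_norm_le pi_pos.le (ae_of_all _ fun θ hθ => ?_)
    (hψ.mul_continuousOn hρ.continuousOn)
  have hmem : θ ∈ Set.Icc 0 π := Set.Ioc_subset_Icc_self hθ
  rw [← sub_mul, norm_mul, norm_eq_abs, norm_eq_abs, abs_of_nonneg (hρ0 θ hmem)]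
  exact mul_le_mul_of_nonneg_right (hb θ hmem) (hρ0 θ hmem)

/-- Convergence passes to `F` as soon as `F` lies within `ψ` of some `h`, with `∫ ψ σ` arbitrarily
small and convergence known for `h` and `ψ`. -/
lemma tendsto_of_approx {ρ : ℕ → ℝ → ℝ} {σ : ℝ → ℝ} (hρ : ∀ l, Continuous (ρ l))
    (hρ0 : ∀ l, ∀ θ ∈ Set.Icc 0 π, 0 ≤ ρ l θ) (hσ : Continuous σ)
    (hσ0 : ∀ θ ∈ Set.Icc 0 π, 0 ≤ σ θ) {F : ℝ → ℝ} (hF : IntervalIntegrable F volume 0 π)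
    (H : ∀ η > 0, ∃ h ψ : ℝ → ℝ, IntervalIntegrable h volume 0 π ∧
      IntervalIntegrable ψ volume 0 π ∧ (∀ θ ∈ Set.Icc 0 π, |F θ - h θ| ≤ ψ θ) ∧
      (∫ θ in (0 : ℝ)..π, ψ θ * σ θ) < η ∧
      Tendsto (fun l => ∫ θ in (0 : ℝ)..π, h θ * ρ l θ) atTop
        (𝓝 (∫ θ in (0 : ℝ)..π, h θ * σ θ)) ∧
      Tendsto (fun l => ∫ θ in (0 : ℝ)..π, ψ θ * ρ l θ) atTop
        (𝓝 (∫ θ in (0 : ℝ)..π, ψ θ * σ θ))) :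
    Tendsto (fun l => ∫ θ in (0 : ℝ)..π, F θ * ρ l θ) atTop
      (𝓝 (∫ θ in (0 : ℝ)..π, F θ * σ θ)) := by
  rw [Metric.tendsto_nhds]
  intro η hη
  obtain ⟨h, ψ, hh, hψ, hb, hsmall, t1, t2⟩ := H (η / 4) (by positivity)
  filter_upwards [Metric.tendsto_nhds.1 t1 (η / 4) (by positivity), t2.eventually_lt_const hsmall]
    with l h1 h2
  have b1 := abs_integral_sub_le (hρ l) (hρ0 l) hF hh hψ hb
  have b2 := abs_integral_sub_le hσ hσ0 hF hh hψ hb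
  rw [Real.dist_eq] at h1 ⊢
  rw [abs_le] at b1 b2
  rw [abs_lt] at h1 ⊢
  constructor <;> linarith [b1.1, b1.2, b2.1, b2.2, h1.1, h1.2]

/-- Weierstrass approximation of `f ∘ arccos` on `[-1, 1]`. -/
lemma tendsto_continuous (m : ℕ) {f : ℝ → ℝ} (hf : ContinuousOn f (Set.Icc 0 π)) :
    Tendsto (fun l : ℕ => ∫ θ in (0 : ℝ)..π, f θ * legDensity m l θ)
      atTop (𝓝 (∫ θ in (0 : ℝ)..π, f θ * (1 / π))) := by
  refine tendsto_of_approx (continuous_legDensity m) (fun l θ => legDensity_nonneg m l)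
    continuous_const (fun θ _ => by positivity) (hf.intervalIntegrable_of_Icc pi_pos.le) ?_
  intro η hη
  have hg : ContinuousOn (fun x => f (arccos x)) (Set.Icc (-1) 1) :=
    hf.comp continuous_arccos.continuousOn fun x _ => ⟨arccos_nonneg x, arccos_le_pi x⟩
  obtain ⟨p, hp⟩ := exists_polynomial_near_of_continuousOn (-1) 1 _ hg (η / 2) (by positivity)
  refine ⟨fun θ => p.eval (cos θ), fun θ => (Polynomial.C (η / 2)).eval (cos θ),
    Continuous.intervalIntegrable (by fun_prop) _ _,
    Continuous.intervalIntegrable (by fun_prop) _ _, ?_, ?_, tendsto_polynomial m p,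
    tendsto_polynomial m _⟩
  · intro θ hθ
    have := hp (cos θ) (cos_mem_Icc θ)
    rw [arccos_cos hθ.1 hθ.2] at this
    rw [abs_sub_comm]
    simpa using this.le
  · simp only [Polynomial.eval_C, intervalIntegral.integral_const, smul_eq_mul]
    have := pi_pos
    field_simp
    linarith

/-- Near the two points at distance `r` from `π / 2`, bumps of shrinking width have vanishing
integral. -/
lemma tendsto_integral_bump (r : ℝ) :
    Tendsto (fun n : ℕ => ∫ θ in (0 : ℝ)..π, max 0 (1 - n * |(|θ - π / 2| - r)|)) atTop (𝓝 0) := by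
  rw [show 𝓝 (0 : ℝ) = 𝓝 (∫ _ in (0 : ℝ)..π, (0 : ℝ)) by simp]
  refine intervalIntegral.tendsto_integral_filter_of_dominated_convergence (fun _ => 1) ?_ ?_ ?_ ?_
  · refine Eventually.of_forall fun n => Continuous.aestronglyMeasurable (by fun_prop)
  · refine Eventually.of_forall fun n => ae_of_all _ fun θ _ => ?_
    rw [norm_eq_abs, abs_of_nonneg (le_max_left _ _)]
    have : 0 ≤ (n : ℝ) * |(|θ - π / 2| - r)| := by positivity
    exact max_le (by norm_num) (by linarith)
  · exact intervalIntegrable_const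
  · have hnull : ∀ᵐ θ : ℝ, θ ∉ ({π / 2 + r, π / 2 - r} : Set ℝ) :=
      (Set.toFinite _).countable.ae_notMem _
    filter_upwards [hnull] with θ hθ _
    have hpos : 0 < |(|θ - π / 2| - r)| := by
      rw [abs_pos, sub_ne_zero]
      rintro h
      apply hθ
      rcases abs_choice (θ - π / 2) with hd | hd <;> rw [hd] at h
      · left; linarith
      · right; simp only [Set.mem_singleton_iff]; linarith
    refine tendsto_const_nhds.congr' ?_
    have ht : Tendsto (fun n : ℕ => (n : ℝ) * |(|θ - π / 2| - r)|) atTop atTop :=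
      tendsto_natCast_atTop_atTop.atTop_mul_const hpos
    filter_upwards [ht.eventually_ge_atTop 1] with n hn
    rw [max_eq_left]
    linarith

/-- The sharp cutoff of `f` is approximated by multiplying with a piecewise linear cutoff; the
difference is controlled by bumps at the two endpoints. -/
lemma tendsto_truncated (m : ℕ) {f : ℝ → ℝ} (hf : ContinuousOn f (Set.Icc 0 π)) (ε : ℝ) :
    Tendsto (fun l : ℕ => ∫ θ in (0 : ℝ)..π,
        (Set.Ioc ε (π - ε)).indicator f θ * legDensity m l θ)
      atTop (𝓝 (∫ θ in (0 : ℝ)..π, (Set.Ioc ε (π - ε)).indicator f θ * (1 / π))) := by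
  have hfi : IntervalIntegrable f volume 0 π := hf.intervalIntegrable_of_Icc pi_pos.le
  have hFi : IntervalIntegrable ((Set.Ioc ε (π - ε)).indicator f) volume 0 π := by
    rw [intervalIntegrable_iff] at hfi ⊢
    exact hfi.indicator measurableSet_Ioc
  refine tendsto_of_approx (continuous_legDensity m) (fun l θ => legDensity_nonneg m l)
    continuous_const (fun θ _ => by positivity) hFi ?_
  intro η hη
  obtain ⟨M, hM⟩ := isCompact_Icc.exists_bound_of_continuousOn hf
  set r := π / 2 - ε with hr
  have ht := ((tendsto_integral_bump r).const_mul (M * (1 / π)))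
  rw [mul_zero] at ht
  obtain ⟨n, hn⟩ := (ht.eventually_lt_const hη).exists
  have hhc : ContinuousOn (fun θ => f θ * max 0 (1 - n * max 0 (|θ - π / 2| - r)))
      (Set.Icc 0 π) := hf.mul (Continuous.continuousOn (by fun_prop))
  have hψc : ContinuousOn (fun θ : ℝ => M * max 0 (1 - n * |(|θ - π / 2| - r)|))
      (Set.Icc 0 π) := Continuous.continuousOn (by fun_prop)
  refine ⟨_, _, hhc.intervalIntegrable_of_Icc pi_pos.le, hψc.intervalIntegrable_of_Icc pi_pos.le,
    ?_, ?_, tendsto_continuous m hhc, tendsto_continuous m hψc⟩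
  · intro θ hθ
    have hMθ := hM θ hθ
    rw [norm_eq_abs] at hMθ
    have hM0 : 0 ≤ M := (abs_nonneg _).trans hMθ
    by_cases hmem : θ ∈ Set.Ioc ε (π - ε)
    · have hle : |θ - π / 2| - r ≤ 0 := by
        have : |θ - π / 2| ≤ r := abs_le.2 ⟨by linarith [hmem.1], by linarith [hmem.2]⟩
        linarith
      rw [Set.indicator_of_mem hmem, max_eq_left hle]
      simp only [mul_zero, sub_zero, zero_le_one, sup_of_le_right, mul_one, sub_self, abs_zero]
      positivity
    · have hge : 0 ≤ |θ - π / 2| - r := by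
        by_contra hlt
        push Not at hlt
        have := abs_lt.1 (show |θ - π / 2| < r by linarith)
        exact hmem ⟨by linarith [this.1], by linarith [this.2]⟩
      rw [Set.indicator_of_notMem hmem, max_eq_right hge, abs_of_nonneg hge, zero_sub, abs_neg,
        abs_mul, abs_of_nonneg (le_max_left 0 (1 - (n : ℝ) * (|θ - π / 2| - r)))]
      exact mul_le_mul_of_nonneg_right hMθ (le_max_left _ _)
  · rw [intervalIntegral.integral_mul_const, intervalIntegral.integral_const_mul]
    calc _ = _ := by ring
      _ < η := hn

lemma integral_indicator_mul {ε : ℝ} (hε0 : 0 < ε) (hεπ : ε < π / 2) (f g : ℝ → ℝ) :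
    ∫ θ in (0 : ℝ)..π, (Set.Ioc ε (π - ε)).indicator f θ * g θ =
      ∫ θ in ε..(π - ε), f θ * g θ := by
  rw [intervalIntegral.integral_of_le pi_pos.le, intervalIntegral.integral_of_le (by linarith)]
  have : ∀ θ, (Set.Ioc ε (π - ε)).indicator f θ * g θ =
      (Set.Ioc ε (π - ε)).indicator (fun θ => f θ * g θ) θ := by
    intro θ
    rw [Set.indicator_mul_left]
  simp only [this]
  rw [setIntegral_indicator measurableSet_Ioc, Set.inter_eq_self_of_subset_right]
  exact Set.Ioc_subset_Ioc hε0.le (by linarith)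

end Approximation

/-- **Intermediate equidistribution limit away from the poles (equation (6.asymp34)).**
For fixed `m ≥ 0` and `0 < ε < π/2`, and every continuous `f : [0, π] → ℝ`,
`2π ∫_ε^{π−ε} f(θ) q_{l,m}(θ) sin θ dθ → (1/π) ∫_ε^{π−ε} f(θ) dθ` as `l → ∞`. -/
theorem spherical_harmonic_sq_equidistribution_away_from_poles
    (m : ℕ) {ε : ℝ} (hε0 : 0 < ε) (hεπ : ε < π / 2)
    (f : ℝ → ℝ) (hf : ContinuousOn f (Set.Icc 0 π)) :
    Tendsto (fun l : ℕ =>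
        2 * π * ∫ θ in ε..(π - ε), f θ * sphericalHarmonicSq l m θ * Real.sin θ)
      atTop
      (nhds ((1 / π) * ∫ θ in ε..(π - ε), f θ)) := by
  have h := tendsto_truncated m hf ε
  simp only [integral_indicator_mul hε0 hεπ] at h
  rw [intervalIntegral.integral_mul_const, mul_comm] at h
  refine h.congr fun l => ?_
  rw [← intervalIntegral.integral_const_mul]
  congr 1
  ext θ
  rw [← sphericalHarmonicSq_eq]
  ring
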